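/- Let (S^1,S^2) be a Lax–Sato pair satisfying the generating Lax–Sato equations, and let σ ∈ R be a wave function with constant parameter p, i.e. (z−p) D^1(z)σ = −{S^2(z), σ} and (z−p) D^2(z)σ = {S^1(z), σ} coefficientwise in z^{−1}. Then {S^1(z), D^1(z)σ} + {S^2(z), D^2(z)σ} = 0 coefficientwise in z^{−1}. -/

import Mathlib

/-!
Common setup for the second heavenly equation hierarchy (Bogdanov–Konopelchenko).

Formal series in `z` with `z`-exponents bounded above are encoded as Hahn series
over `ℤ` in the variable `w = z⁻¹`: the coefficient at `n : ℤ` of `A : LS R` is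
the coefficient of `z^{-n}` of the corresponding series.
-/

noncomputable section

/-- Series in `z` with `z`-exponents bounded above (the coefficient at `n : ℤ`
is the coefficient of `z^{-n}`). -/
abbrev LS (R : Type*) [CommRing R] : Type _ := HahnSeries ℤ R

/-- The variable `z`. -/
def zz {R : Type*} [CommRing R] : LS R := HahnSeries.single (-1 : ℤ) (1 : R)

/-- Constant series. -/
def CC {R : Type*} [CommRing R] (r : R) : LS R := HahnSeries.C r

/-- `tail g = Σ_{k≥0} (g k) · z^{-(k+1)}` : a series in negative powers of `z`. -/
def tail {R : Type*} [CommRing R] (g : ℕ → R) : LS R :=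
  HahnSeries.single (1 : ℤ) (1 : R) * HahnSeries.ofPowerSeries ℤ R (PowerSeries.mk g)

/-- `geom v = 1/(z - v) := Σ_{k≥0} v^k z^{-(k+1)}`. -/
def geom {R : Type*} [CommRing R] (v : R) : LS R := tail fun k => v ^ k

/-- The projection `(·)_-` keeping only negative powers of `z`. -/
def truncMinus {R : Type*} [CommRing R] (A : LS R) : LS R where
  coeff n := if 1 ≤ n then A.coeff n else 0
  isPWO_support' := A.isPWO_support'.mono (fun n hn => by
    by_cases h : (1:ℤ) ≤ n <;> simp_all [Function.mem_support])

/-- The projection `(·)_+` keeping only nonnegative powers of `z`. -/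
def truncPlus {R : Type*} [CommRing R] (A : LS R) : LS R where
  coeff n := if n ≤ 0 then A.coeff n else 0
  isPWO_support' := A.isPWO_support'.mono (fun n hn => by
    by_cases h : n ≤ (0:ℤ) <;> simp_all [Function.mem_support])

/-- A commutative ring equipped with pairwise commuting derivations `∂^{j+1}_n`
(`j : Fin 2`, `n : ℕ`) and distinguished elements `t^{j+1}_n` satisfying
`∂^j_m t^k_n = δ_{jk} δ_{mn}`. -/
structure HeavenlySetting (R : Type*) [CommRing R] where
  d : Fin 2 → ℕ → R → R
  d_add : ∀ j n a b, d j n (a + b) = d j n a + d j n b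
  d_mul : ∀ j n a b, d j n (a * b) = a * d j n b + d j n a * b
  d_comm : ∀ j n k m a, d j n (d k m a) = d k m (d j n a)
  t : Fin 2 → ℕ → R
  d_t : ∀ j n k m, d j n (t k m) = if j = k ∧ n = m then 1 else 0

/-- The data of a Lax–Sato pair: `Sneg j n` is the coefficient `S^{j+1}_{n+1}`
of `z^{-(n+1)}` in `S^{j+1} = Σ_{n≥0} t^{j+1}_n z^n + Σ_{n≥1} S^{j+1}_n z^{-n}`. -/
structure LaxPair (R : Type*) [CommRing R] where
  Sneg : Fin 2 → ℕ → R

namespace HeavenlySetting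

variable {R : Type*} [CommRing R] (H : HeavenlySetting R) (P : LaxPair R)

/-- The coefficient of `z^n` in `S^{j+1}`. -/
def coeffS (j : Fin 2) (n : ℤ) : R :=
  if 0 ≤ n then H.t j n.toNat else P.Sneg j (-n - 1).toNat

/-- The series `∂^{a+1}_m S^{j+1}` (its `z`-exponents are bounded above since
`∂^{a+1}_m t^{j+1}_n = δ_{aj} δ_{mn}`). -/
def dS (a : Fin 2) (m : ℕ) (j : Fin 2) : LS R :=
  HahnSeries.single (-(m : ℤ)) (if a = j then 1 else 0)
    + tail fun k => H.d a m (P.Sneg j k)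

/-- `S^{j+1}_x = ∂^1_0 S^{j+1}`. -/
def Sx (j : Fin 2) : LS R := H.dS P 0 0 j

/-- `S^{j+1}_y = ∂^2_0 S^{j+1}`. -/
def Sy (j : Fin 2) : LS R := H.dS P 1 0 j

/-- The condition `(dS^1 ∧ dS^2)_- = 0`. -/
def WedgeMinusZero : Prop :=
  ∀ a b : Fin 2, ∀ m n : ℕ,
    truncMinus (H.dS P a m 0 * H.dS P b n 1 - H.dS P b n 0 * H.dS P a m 1) = 0

/-- The Lax–Sato equations `∂^1_n S^j = -{(z^n S^2)_+, S^j}`,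
`∂^2_n S^j = {(z^n S^1)_+, S^j}` together with the bracket `{S^1,S^2} = 1`;
here `{f,g} = f_x g_y - f_y g_x` and `((z^n S^k)_+)_x = (z^n (S^k)_x)_+` etc. -/
def LaxSatoEqs : Prop :=
  (∀ n : ℕ, ∀ j : Fin 2,
    H.dS P 0 n j =
      -(truncPlus (zz ^ n * H.Sx P 1) * H.Sy P j
        - truncPlus (zz ^ n * H.Sy P 1) * H.Sx P j)) ∧
  (∀ n : ℕ, ∀ j : Fin 2,
    H.dS P 1 n j =
      truncPlus (zz ^ n * H.Sx P 0) * H.Sy P j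
        - truncPlus (zz ^ n * H.Sy P 0) * H.Sx P j) ∧
  (H.Sx P 0 * H.Sy P 1 - H.Sy P 0 * H.Sx P 1 = 1)

/-- Coefficient of `z'^k` in `D^{a+1}(z') S^{j+1}(z) = Σ_{m≥0} z'^{-m-1} ∂^{a+1}_m S^{j+1}(z)`. -/
def Dc (a j : Fin 2) (k : ℤ) : LS R :=
  if k ≤ -1 then H.dS P a (-k - 1).toNat j else 0

/-- Generating Lax–Sato equations
`(z'-z) D^1(z') S^j(z) = -{S^2(z'), S^j(z)}` and
`(z'-z) D^2(z') S^j(z) = {S^1(z'), S^j(z)}`, stated coefficientwise in `z'`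
(`k : ℤ` being the `z'`-exponent; both sides of each equation are series in `z`). -/
def GenLaxSato : Prop :=
  (∀ j : Fin 2, ∀ k : ℤ,
    H.Dc P 0 j (k - 1) - zz * H.Dc P 0 j k =
      -(CC (H.d 0 0 (H.coeffS P 1 k)) * H.Sy P j
        - CC (H.d 1 0 (H.coeffS P 1 k)) * H.Sx P j)) ∧
  (∀ j : Fin 2, ∀ k : ℤ,
    H.Dc P 1 j (k - 1) - zz * H.Dc P 1 j k =
      CC (H.d 0 0 (H.coeffS P 0 k)) * H.Sy P j
        - CC (H.d 1 0 (H.coeffS P 0 k)) * H.Sx P j)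

/-- `Θ` is a τ-function for the pair: `S^1_{n+1} = -∂^2_n Θ`, `S^2_{n+1} = ∂^1_n Θ`. -/
def IsTau (Θ : R) : Prop :=
  ∀ n : ℕ, P.Sneg 0 n = -H.d 1 n Θ ∧ P.Sneg 1 n = H.d 0 n Θ

/-- `σ` is a wave function with constant parameter `p`:
`(z-p) D^1(z)σ = -{S^2(z), σ}` and `(z-p) D^2(z)σ = {S^1(z), σ}`,
coefficientwise in `z^{-1}`, with `p` annihilated by all derivations. -/
def IsWave (σ p : R) : Prop :=
  (∀ a : Fin 2, ∀ n : ℕ, H.d a n p = 0) ∧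
  ((zz - CC p) * tail (fun n => H.d 0 n σ) =
    -(H.Sx P 1 * CC (H.d 1 0 σ) - H.Sy P 1 * CC (H.d 0 0 σ))) ∧
  ((zz - CC p) * tail (fun n => H.d 1 n σ) =
    H.Sx P 0 * CC (H.d 1 0 σ) - H.Sy P 0 * CC (H.d 0 0 σ))

end HeavenlySetting

/-!
The generating equation for `D^1(z') S^1(z)` unrolls to `∂^1_n S^1 = -{(z^n S^2)_+, S^1}`.
Replacing `(z^n S^2)_+` by `z^n S^2` adds only negative powers of `z`, so the `z^{-n}` coefficient
of `{S^1, S^2}` equals the `z^0` coefficient of `∂^1_n S^1`, which is `δ_{n0}`. Hence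
`{S^1, S^2} = 1`.

Since `p` is constant, the wave equations give
`(z - p) ({S^1, D^1 σ} + {S^2, D^2 σ}) = -{S^1, {S^2, σ}} + {S^2, {S^1, σ}}`. By the Jacobi identity
the right side is `-{{S^1, S^2}, σ} = -{1, σ} = 0`, and `z - p` is invertible.
-/

section Jacobi

variable {k A : Type*} [CommSemiring k] [CommRing A] [Algebra k A] (Dx Dy : Derivation k A A)

lemma poissonBracket_jacobi_of_closed {ux uy vx vy wx wy : A}
    (hu : Dy ux = Dx uy) (hv : Dy vx = Dx vy) (hw : Dy wx = Dx wy) :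
    (ux * Dy (vx * wy - vy * wx) - uy * Dx (vx * wy - vy * wx))
      - (vx * Dy (ux * wy - uy * wx) - vy * Dx (ux * wy - uy * wx))
      = Dx (ux * vy - uy * vx) * wy - Dy (ux * vy - uy * vx) * wx := by
  simp only [map_sub, Derivation.leibniz, smul_eq_mul]
  rw [hu, hv, hw]
  ring

end Jacobi

section CoeffwiseDerivation

variable {Γ k A : Type*} [PartialOrder Γ] [AddCommMonoid Γ] [IsOrderedCancelAddMonoid Γ]
  [CommSemiring k] [CommRing A] [Algebra k A]

lemma hahnSeries_map_mul_of_derivation (D : Derivation k A A) (f g : HahnSeries Γ A) :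
    (f * g).map D = f * g.map D + g * f.map D := by
  have support_map (h : HahnSeries Γ A) : (h.map D).support ⊆ h.support := fun i hi hzero =>
    hi (by rw [HahnSeries.map_coeff, hzero, map_zero])
  rw [mul_comm g]
  ext i
  rw [HahnSeries.coeff_add, HahnSeries.map_coeff, HahnSeries.coeff_mul,
    HahnSeries.coeff_mul_right' g.isPWO_support (support_map g),
    HahnSeries.coeff_mul_left' f.isPWO_support (support_map f), map_sum,
    ← Finset.sum_add_distrib]
  refine Finset.sum_congr rfl fun ij _ => ?_
  rw [D.leibniz, smul_eq_mul, smul_eq_mul, mul_comm (g.coeff _), HahnSeries.map_coeff,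
    HahnSeries.map_coeff]

/-- The extension of a derivation of the coefficient ring to Hahn series, acting on each
coefficient. -/
def coeffwiseDerivation (D : Derivation k A A) :
    Derivation k (HahnSeries Γ A) (HahnSeries Γ A) :=
  Derivation.mk'
    { toFun := fun f => f.map D
      map_add' := fun f g => by ext; simp
      map_smul' := fun c f => by ext; simp }
    (hahnSeries_map_mul_of_derivation D)

lemma coeff_coeffwiseDerivation (D : Derivation k A A) (f : HahnSeries Γ A) (i : Γ) :
    (coeffwiseDerivation D f).coeff i = D (f.coeff i) :=
  rfl

lemma coeffwiseDerivation_single (D : Derivation k A A) (i : Γ) (a : A) :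
    coeffwiseDerivation D (HahnSeries.single i a) = HahnSeries.single i (D a) := by
  ext j
  by_cases h : j = i <;> simp [coeff_coeffwiseDerivation, h]

end CoeffwiseDerivation

section Series

variable {R : Type*} [CommRing R]

lemma coeff_zz_pow_mul (m : ℕ) (f : LS R) (n : ℤ) : (zz ^ m * f).coeff n = f.coeff (n + m) := by
  rw [zz, HahnSeries.single_pow, HahnSeries.coeff_single_mul]
  simp

lemma coeff_tail (g : ℕ → R) (n : ℤ) :
    (tail g).coeff n = if 1 ≤ n then g (n - 1).toNat else 0 := by
  rw [tail, HahnSeries.coeff_single_mul, PowerSeries.coeff_coe, PowerSeries.coeff_mk, one_mul]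
  by_cases h : 1 ≤ n
  · rw [if_pos h, if_neg (by lia), show (n - 1).natAbs = (n - 1).toNat by lia]
  · rw [if_neg h, if_pos (by lia)]

lemma isUnit_zz_sub_CC (p : R) : IsUnit (zz - CC p) := by
  have factor : zz - CC p = zz * (1 - HahnSeries.single 1 p) := by
    simp [zz, CC, mul_sub, HahnSeries.single_mul_single, HahnSeries.C_apply]
  have isUnit_zz : IsUnit (zz : LS R) :=
    .of_mul_eq_one (HahnSeries.single 1 1) (by simp [zz, HahnSeries.single_mul_single])
  rw [factor]
  refine isUnit_zz.mul (HahnSeries.isUnit_of_orderTop_pos ?_)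
  rw [sub_sub_cancel_left, HahnSeries.orderTop_neg]
  exact HahnSeries.lt_orderTop_single Int.zero_lt_one

lemma truncPlus_add_truncMinus (f : LS R) : truncPlus f + truncMinus f = f := by
  ext n
  by_cases h : n ≤ 0
  · simp [truncPlus, truncMinus, h, show ¬ 1 ≤ n by lia]
  · simp [truncPlus, truncMinus, h, show 1 ≤ n by lia]

lemma truncPlus_zz_mul (f : LS R) :
    truncPlus (zz * f) = zz * truncPlus f + CC (f.coeff 1) := by
  have coeff_zz_mul (g : LS R) (n : ℤ) : (zz * g).coeff n = g.coeff (n + 1) := by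
    simpa using coeff_zz_pow_mul 1 g n
  ext n
  rw [HahnSeries.coeff_add, coeff_zz_mul, CC, HahnSeries.C_apply]
  rcases lt_trichotomy n 0 with h | rfl | h
  · simp [truncPlus, coeff_zz_mul, HahnSeries.coeff_single_of_ne h.ne, h.le,
      show n + 1 ≤ 0 by lia]
  · simp [truncPlus, coeff_zz_mul]
  · simp [truncPlus, HahnSeries.coeff_single_of_ne h.ne', h.not_ge,
      show ¬ n + 1 ≤ 0 by lia]

lemma truncPlus_eq_CC {f : LS R} (hf : 0 ≤ f.orderTop) : truncPlus f = CC (f.coeff 0) := by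
  ext n
  rw [CC, HahnSeries.C_apply]
  rcases lt_trichotomy n 0 with h | rfl | h
  · simp [truncPlus, HahnSeries.coeff_single_of_ne h.ne, HahnSeries.le_orderTop_iff_forall.mp hf n
      (by exact_mod_cast h)]
  · simp [truncPlus]
  · simp [truncPlus, HahnSeries.coeff_single_of_ne h.ne', h.not_ge]

lemma orderTop_truncMinus_pos (f : LS R) : 0 < (truncMinus f).orderTop := by
  refine lt_of_lt_of_le (b := ((1 : ℤ) : WithTop ℤ)) (by exact_mod_cast Int.zero_lt_one) ?_
  refine HahnSeries.le_orderTop_iff_forall.mpr fun n hn => ?_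
  exact if_neg (not_le.mpr (by exact_mod_cast hn))

lemma coeff_truncMinus_mul_zero (f : LS R) {g : LS R} (hg : 0 ≤ g.orderTop) :
    (truncMinus f * g).coeff 0 = 0 :=
  HahnSeries.coeff_eq_zero_of_lt_orderTop <|
    (add_pos_of_pos_of_nonneg (orderTop_truncMinus_pos f) hg).trans_le
      HahnSeries.orderTop_add_le_mul

end Series

namespace HeavenlySetting

variable {R : Type*} [CommRing R] (H : HeavenlySetting R) (P : LaxPair R)

/-- The coefficientwise `ℤ`-module structure on series, in which instance search would prefer
`AddCommGroup.toIntModule`. -/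
local instance seriesIntModule : Module ℤ (LS R) := HahnSeries.instModule

/-- The coefficientwise `ℤ`-algebra structure on series, in which instance search would prefer
`HahnSeries.powerSeriesAlgebra`. -/
local instance seriesIntAlgebra : Algebra ℤ (LS R) := HahnSeries.instAlgebra

/-- The map `∂^{a+1}_n` as a bundled derivation of `R`. -/
def derivation (a : Fin 2) (n : ℕ) : Derivation ℤ R R :=
  Derivation.mk' (AddMonoidHom.mk' (H.d a n) (H.d_add a n)).toIntLinearMap fun x y => by
    simp [H.d_mul, mul_comm y]

lemma d_one (a : Fin 2) (n : ℕ) : H.d a n 1 = 0 :=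
  (H.derivation a n).map_one_eq_zero

lemma d_zero (a : Fin 2) (n : ℕ) : H.d a n 0 = 0 :=
  map_zero (H.derivation a n)

/-- The derivation `∂^{a+1}_n` acting on series coefficientwise. -/
def dSeries (a : Fin 2) (n : ℕ) : Derivation ℤ (LS R) (LS R) :=
  coeffwiseDerivation (H.derivation a n)

lemma dSeries_single (a : Fin 2) (n : ℕ) (i : ℤ) (r : R) :
    H.dSeries a n (HahnSeries.single i r) = HahnSeries.single i (H.d a n r) :=
  coeffwiseDerivation_single _ i r

lemma dSeries_zz (a : Fin 2) (n : ℕ) : H.dSeries a n zz = 0 := by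
  rw [zz, dSeries_single, d_one, map_zero]

lemma dSeries_CC (a : Fin 2) (n : ℕ) (r : R) : H.dSeries a n (CC r) = CC (H.d a n r) :=
  H.dSeries_single a n 0 r

lemma dSeries_one (a : Fin 2) (n : ℕ) : H.dSeries a n 1 = 0 :=
  (H.dSeries a n).map_one_eq_zero

lemma dSeries_zz_sub_CC_mul {a : Fin 2} {n : ℕ} {p : R} (hp : H.d a n p = 0) (f : LS R) :
    H.dSeries a n ((zz - CC p) * f) = (zz - CC p) * H.dSeries a n f := by
  have dSeries_zz_sub_CC : H.dSeries a n (zz - CC p) = 0 := by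
    rw [map_sub, dSeries_zz, dSeries_CC, hp, CC, map_zero, sub_zero]
  rw [Derivation.leibniz, dSeries_zz_sub_CC, smul_zero, add_zero, smul_eq_mul]

lemma dSeries_tail (a : Fin 2) (n : ℕ) (g : ℕ → R) :
    H.dSeries a n (tail g) = tail fun k => H.d a n (g k) := by
  ext i
  rw [dSeries, coeff_coeffwiseDerivation, coeff_tail, coeff_tail]
  split_ifs
  · rfl
  · exact map_zero _

lemma dSeries_dS (a b j : Fin 2) (m n : ℕ) :
    H.dSeries a m (H.dS P b n j) = tail fun k => H.d a m (H.d b n (P.Sneg j k)) := by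
  rw [dS, map_add, dSeries_tail, dSeries_single]
  split_ifs <;> simp [d_one, d_zero]

lemma dSeries_dS_comm (a b j : Fin 2) (m n : ℕ) :
    H.dSeries a m (H.dS P b n j) = H.dSeries b n (H.dS P a m j) := by
  simp only [dSeries_dS, H.d_comm a m b n]

lemma coeff_dS (a j : Fin 2) (m : ℕ) (n : ℤ) :
    (H.dS P a m j).coeff n = H.d a m (H.coeffS P j (-n)) := by
  rw [dS, HahnSeries.coeff_add, coeff_tail, coeffS, HahnSeries.coeff_single]
  by_cases hn : 1 ≤ n
  · rw [if_neg (show n ≠ -(m : ℤ) by lia), if_pos hn, if_neg (show ¬ 0 ≤ -n by lia), zero_add,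
      neg_neg]
  · rw [if_neg hn, if_pos (show 0 ≤ -n by lia), H.d_t, add_zero, ← ite_and]
    simp only [show n = -(m : ℤ) ↔ m = (-n).toNat by lia, and_comm]

lemma orderTop_dS_zero_nonneg (a j : Fin 2) : 0 ≤ (H.dS P a 0 j).orderTop := by
  refine HahnSeries.le_orderTop_iff_forall.mpr fun n hn => ?_
  have hn : n < 0 := by exact_mod_cast hn
  rw [coeff_dS, coeffS, if_pos (by lia), H.d_t, if_neg (by lia)]

lemma coeff_Sx (j : Fin 2) (n : ℤ) : (H.Sx P j).coeff n = H.d 0 0 (H.coeffS P j (-n)) :=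
  H.coeff_dS P 0 j 0 n

lemma coeff_Sy (j : Fin 2) (n : ℤ) : (H.Sy P j).coeff n = H.d 1 0 (H.coeffS P j (-n)) :=
  H.coeff_dS P 1 j 0 n

lemma orderTop_Sx_nonneg (j : Fin 2) : 0 ≤ (H.Sx P j).orderTop :=
  H.orderTop_dS_zero_nonneg P 0 j

lemma orderTop_Sy_nonneg (j : Fin 2) : 0 ≤ (H.Sy P j).orderTop :=
  H.orderTop_dS_zero_nonneg P 1 j

lemma dSeries_Sx_eq_dSeries_Sy (j : Fin 2) : H.dSeries 1 0 (H.Sx P j) = H.dSeries 0 0 (H.Sy P j) :=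
  H.dSeries_dS_comm P 1 0 j 0 0

lemma orderTop_bracket_nonneg :
    0 ≤ (H.Sx P 0 * H.Sy P 1 - H.Sy P 0 * H.Sx P 1).orderTop := by
  refine le_trans (le_min ?_ ?_) HahnSeries.min_orderTop_le_orderTop_sub
  · exact (add_nonneg (H.orderTop_Sx_nonneg P 0) (H.orderTop_Sy_nonneg P 1)).trans
      HahnSeries.orderTop_add_le_mul
  · exact (add_nonneg (H.orderTop_Sy_nonneg P 0) (H.orderTop_Sx_nonneg P 1)).trans
      HahnSeries.orderTop_add_le_mul

variable {H P}

lemma GenLaxSato.dS_succ (h : H.GenLaxSato P) (n : ℕ) (j : Fin 2) :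
    H.dS P 0 (n + 1) j = zz * H.dS P 0 n j -
      (CC ((H.Sx P 1).coeff (n + 1)) * H.Sy P j - CC ((H.Sy P 1).coeff (n + 1)) * H.Sx P j) := by
  have eqn := h.1 j (-(n + 1 : ℤ))
  rw [Dc, Dc, if_pos (by lia), if_pos (by lia),
    show (-(-(n + 1 : ℤ) - 1) - 1).toNat = n + 1 by lia,
    show (-(-(n + 1 : ℤ)) - 1).toNat = n by lia] at eqn
  rw [coeff_Sx, coeff_Sy]
  linear_combination eqn

lemma GenLaxSato.dS_eq_truncPlus (h : H.GenLaxSato P) (n : ℕ) (j : Fin 2) :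
    H.dS P 0 n j =
      -(truncPlus (zz ^ n * H.Sx P 1) * H.Sy P j
        - truncPlus (zz ^ n * H.Sy P 1) * H.Sx P j) := by
  induction n with
  | zero =>
    have eqn := h.1 j 0
    rw [pow_zero, one_mul, one_mul, truncPlus_eq_CC (H.orderTop_Sx_nonneg P 1),
      truncPlus_eq_CC (H.orderTop_Sy_nonneg P 1), coeff_Sx, coeff_Sy, neg_zero]
    simpa [Dc] using eqn
  | succ n ih =>
    have truncPlus_succ (f : LS R) :
        truncPlus (zz ^ (n + 1) * f) = zz * truncPlus (zz ^ n * f) + CC (f.coeff (n + 1)) := by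
      rw [pow_succ', mul_assoc, truncPlus_zz_mul, coeff_zz_pow_mul, add_comm (1 : ℤ)]
    rw [h.dS_succ, ih, truncPlus_succ, truncPlus_succ]
    ring

lemma GenLaxSato.bracket_eq_one (h : H.GenLaxSato P) :
    H.Sx P 0 * H.Sy P 1 - H.Sy P 0 * H.Sx P 1 = 1 := by
  ext n
  rw [HahnSeries.coeff_one]
  obtain hn | ⟨m, rfl⟩ := (lt_or_ge n 0).imp_right Int.eq_ofNat_of_zero_le
  · rw [if_neg hn.ne]
    refine HahnSeries.coeff_eq_zero_of_lt_orderTop ?_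
    exact lt_of_lt_of_le (b := 0) (by exact_mod_cast hn) (H.orderTop_bracket_nonneg P)
  have split : zz ^ m * (H.Sx P 0 * H.Sy P 1 - H.Sy P 0 * H.Sx P 1) =
      H.dS P 0 m 0 + (truncMinus (zz ^ m * H.Sy P 1) * H.Sx P 0
        - truncMinus (zz ^ m * H.Sx P 1) * H.Sy P 0) := by
    rw [h.dS_eq_truncPlus]
    linear_combination H.Sy P 0 * truncPlus_add_truncMinus (zz ^ m * H.Sx P 1)
      - H.Sx P 0 * truncPlus_add_truncMinus (zz ^ m * H.Sy P 1)
  have coeff_eq := congrArg (HahnSeries.coeff · 0) split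
  simp only [HahnSeries.coeff_add, HahnSeries.coeff_sub] at coeff_eq
  rw [coeff_truncMinus_mul_zero _ (H.orderTop_Sx_nonneg P 0),
    coeff_truncMinus_mul_zero _ (H.orderTop_Sy_nonneg P 0), coeff_dS, coeff_zz_pow_mul] at coeff_eq
  simpa [coeffS, H.d_t] using coeff_eq

lemma bracket_bracket_comm_of_bracket_constant
    (hbracket : ∀ a, H.dSeries a 0 (H.Sx P 0 * H.Sy P 1 - H.Sy P 0 * H.Sx P 1) = 0) (σ : R) :
    H.Sx P 0 * H.dSeries 1 0 (H.Sx P 1 * CC (H.d 1 0 σ) - H.Sy P 1 * CC (H.d 0 0 σ))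
        - H.Sy P 0 * H.dSeries 0 0 (H.Sx P 1 * CC (H.d 1 0 σ) - H.Sy P 1 * CC (H.d 0 0 σ))
      = H.Sx P 1 * H.dSeries 1 0 (H.Sx P 0 * CC (H.d 1 0 σ) - H.Sy P 0 * CC (H.d 0 0 σ))
        - H.Sy P 1 * H.dSeries 0 0 (H.Sx P 0 * CC (H.d 1 0 σ) - H.Sy P 0 * CC (H.d 0 0 σ)) := by
  have dSeries_CC_comm :
      H.dSeries 1 0 (CC (H.d 0 0 σ)) = H.dSeries 0 0 (CC (H.d 1 0 σ)) := by
    rw [dSeries_CC, dSeries_CC, H.d_comm]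
  have jacobi := poissonBracket_jacobi_of_closed (H.dSeries 0 0) (H.dSeries 1 0)
    (H.dSeries_Sx_eq_dSeries_Sy P 0) (H.dSeries_Sx_eq_dSeries_Sy P 1) dSeries_CC_comm
  rwa [hbracket, hbracket, zero_mul, zero_mul, sub_zero, sub_eq_zero] at jacobi

end HeavenlySetting

open HeavenlySetting

theorem heavenly_wave_cross_derivative_general {R : Type*} [CommRing R]
    (H : HeavenlySetting R) (P : LaxPair R)
    (hbracket : ∀ a, H.dSeries a 0 (H.Sx P 0 * H.Sy P 1 - H.Sy P 0 * H.Sx P 1) = 0)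
    (σ p : R) (hwave : H.IsWave P σ p) :
    H.Sx P 0 * tail (fun n => H.d 1 0 (H.d 0 n σ))
      - H.Sy P 0 * tail (fun n => H.d 0 0 (H.d 0 n σ))
      + (H.Sx P 1 * tail (fun n => H.d 1 0 (H.d 1 n σ))
        - H.Sy P 1 * tail (fun n => H.d 0 0 (H.d 1 n σ))) = 0 := by
  obtain ⟨hp, hwave₁, hwave₂⟩ := hwave
  have d_wave₁ (a : Fin 2) := congrArg (H.dSeries a 0) hwave₁
  have d_wave₂ (a : Fin 2) := congrArg (H.dSeries a 0) hwave₂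
  simp only [H.dSeries_zz_sub_CC_mul (hp _ 0), dSeries_tail, map_neg] at d_wave₁ d_wave₂
  apply (isUnit_zz_sub_CC p).mul_left_cancel
  linear_combination H.Sx P 0 * d_wave₁ 1 - H.Sy P 0 * d_wave₁ 0 + H.Sx P 1 * d_wave₂ 1
    - H.Sy P 1 * d_wave₂ 0 - bracket_bracket_comm_of_bracket_constant hbracket σ

/-- If the pair satisfies the generating Lax–Sato equations and
`σ` is a wave function with constant parameter `p`, then
`{S^1(z), D^1(z)σ} + {S^2(z), D^2(z)σ} = 0` coefficientwise in `z^{-1}`. -/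
theorem heavenly_wave_cross_derivative {R : Type*} [CommRing R]
    (H : HeavenlySetting R) (P : LaxPair R)
    (hgen : H.GenLaxSato P) (σ p : R) (hwave : H.IsWave P σ p) :
    H.Sx P 0 * tail (fun n => H.d 1 0 (H.d 0 n σ))
      - H.Sy P 0 * tail (fun n => H.d 0 0 (H.d 0 n σ))
      + (H.Sx P 1 * tail (fun n => H.d 1 0 (H.d 1 n σ))
        - H.Sy P 1 * tail (fun n => H.d 0 0 (H.d 1 n σ))) = 0 :=
  heavenly_wave_cross_derivative_general H P
    (fun a => by rw [hgen.bracket_eq_one, dSeries_one]) σ p hwave
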